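/- Let X be a uniformly convex real Banach space, let r be a Helly sequence for X, let k ≥ 1, and let 𝔽_1, …, 𝔽_k be finite nonempty families of convex subsets of X. Suppose m_1, …, m_k are natural numbers such that for every point p ∈ X and every i ∈ {1,…,k}, at least m_i members K of 𝔽_i satisfy dist(p, K) > 1. Then for every q ∈ X there are at least m_1·m_2·⋯·m_k rainbow k-tuples (K_1, …, K_k) ∈ 𝔽_1 × ⋯ × 𝔽_k such that either ⋂_{j=1}^{k} K_j is empty or dist(q, ⋂_{j=1}^{k} K_j) > 1/r_k. -/

import Mathlib

open scoped Classical

noncomputable section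

/-- `y` is quasi-orthogonal to `x`: some nonzero continuous linear functional attains
its norm on `x` and vanishes on `y`. -/
def QuasiOrth {X : Type*} [NormedAddCommGroup X] [NormedSpace ℝ X] (y x : X) : Prop :=
  ∃ f : X →L[ℝ] ℝ, f ≠ 0 ∧ f x = ‖f‖ * ‖x‖ ∧ f y = 0

/-- `ζ_X(ε) = inf {‖x + ε y‖ : ‖x‖ = ‖y‖ = 1, y ⌐ x}`. -/
def zetaConv (X : Type*) [NormedAddCommGroup X] [NormedSpace ℝ X] (ε : ℝ) : ℝ :=
  sInf {t : ℝ | ∃ x y : X, ‖x‖ = 1 ∧ ‖y‖ = 1 ∧ QuasiOrth y x ∧ t = ‖x + ε • y‖}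

/-- `ζ⁺_X(ε) = sup {‖x + ε y‖ : ‖x‖ = ‖y‖ = 1, y ⌐ x}`. -/
def zetaSmooth (X : Type*) [NormedAddCommGroup X] [NormedSpace ℝ X] (ε : ℝ) : ℝ :=
  sSup {t : ℝ | ∃ x y : X, ‖x‖ = 1 ∧ ‖y‖ = 1 ∧ QuasiOrth y x ∧ t = ‖x + ε • y‖}

/-- The modulus of convexity `δ_X(ε)`. -/
def modConv (X : Type*) [NormedAddCommGroup X] [NormedSpace ℝ X] (ε : ℝ) : ℝ :=
  sInf {t : ℝ | ∃ x y : X, ‖x‖ ≤ 1 ∧ ‖y‖ ≤ 1 ∧ ε ≤ ‖x - y‖ ∧ t = 1 - ‖x + y‖ / 2}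

/-- The modulus of smoothness `ρ_X(τ)`. -/
def modSmooth (X : Type*) [NormedAddCommGroup X] [NormedSpace ℝ X] (τ : ℝ) : ℝ :=
  sSup {t : ℝ | ∃ x y : X, ‖x‖ = 1 ∧ ‖y‖ = τ ∧ t = (‖x + y‖ + ‖x - y‖) / 2 - 1}

/-- `X` is uniformly convex: the modulus of convexity is positive on `(0, 2]`. -/
def UnifConvex (X : Type*) [NormedAddCommGroup X] [NormedSpace ℝ X] : Prop :=
  ∀ ε ∈ Set.Ioc (0 : ℝ) 2, 0 < modConv X ε

/-- `X` is uniformly smooth: `ρ_X(τ)/τ → 0` as `τ → 0⁺`. -/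
def UnifSmooth (X : Type*) [NormedAddCommGroup X] [NormedSpace ℝ X] : Prop :=
  Filter.Tendsto (fun τ => modSmooth X τ / τ) (nhdsWithin 0 (Set.Ioi 0)) (nhds 0)

/-- A Helly sequence for `X`: `r : {1,2,…} → (0,1]` with `r 1 = 1` and
`r (j+1) * ζ_X (r (j+1)) = r j` for all `j ≥ 1`. -/
def IsHellySeq (X : Type*) [NormedAddCommGroup X] [NormedSpace ℝ X] (r : ℕ → ℝ) : Prop :=
  (∀ j : ℕ, 1 ≤ j → r j ∈ Set.Ioc (0 : ℝ) 1) ∧ r 1 = 1 ∧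
    ∀ j : ℕ, 1 ≤ j → r (j + 1) * zetaConv X (r (j + 1)) = r j

end

section HellyHelpers
variable {X : Type*} [NormedAddCommGroup X] [NormedSpace ℝ X]

theorem zeta_le' {x y : X} (hx : ‖x‖ = 1) (hy : ‖y‖ = 1) (h : QuasiOrth y x) (ε : ℝ) :
    zetaConv X ε ≤ ‖x + ε • y‖ := by
  apply csInf_le
  · refine ⟨0, ?_⟩
    rintro t ⟨x, y, -, -, -, rfl⟩
    exact norm_nonneg _
  · exact ⟨x, y, hx, hy, h, rfl⟩

theorem le_zeta' (hN : ∃ x y : X, ‖x‖ = 1 ∧ ‖y‖ = 1 ∧ QuasiOrth y x) {ε c : ℝ}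
    (h : ∀ x y : X, ‖x‖ = 1 → ‖y‖ = 1 → QuasiOrth y x → c ≤ ‖x + ε • y‖) :
    c ≤ zetaConv X ε := by
  obtain ⟨x, y, hx, hy, hq⟩ := hN
  apply le_csInf
  · exact ⟨_, x, y, hx, hy, hq, rfl⟩
  · rintro t ⟨x, y, hx, hy, hq, rfl⟩
    exact h x y hx hy hq

theorem zeta_mono' (hN : ∃ x y : X, ‖x‖ = 1 ∧ ‖y‖ = 1 ∧ QuasiOrth y x) {a b : ℝ}
    (ha : 0 ≤ a) (hab : a ≤ b) : zetaConv X a ≤ zetaConv X b := by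
  apply le_zeta' hN
  intro x y hx hy hq
  refine (zeta_le' hx hy hq a).trans ?_
  rcases hab.eq_or_lt with rfl | hlt
  · exact le_rfl
  have hb : 0 < b := ha.trans_lt hlt
  obtain ⟨f, hf0, hfx, hfy⟩ := hq
  have hfpos : 0 < ‖f‖ := norm_pos_iff.2 hf0
  have h1 : 1 ≤ ‖x + b • y‖ := by
    have h2 : f (x + b • y) = ‖f‖ := by simp [hfx, hfy, hx]
    have h3 := f.le_opNorm (x + b • y)
    rw [h2, Real.norm_of_nonneg hfpos.le] at h3
    nlinarith
  have hs0 : 0 ≤ a / b := by positivity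
  have hs1 : a / b ≤ 1 := (div_le_one hb).2 hab
  have he : x + a • y = (1 - a / b) • x + (a / b) • (x + b • y) := by
    rw [smul_add, smul_smul, div_mul_cancel₀ _ hb.ne', sub_smul, one_smul]; abel
  rw [he]
  refine (norm_add_le _ _).trans ?_
  rw [norm_smul, norm_smul, Real.norm_of_nonneg hs0, Real.norm_of_nonneg (sub_nonneg.2 hs1), hx]
  nlinarith

theorem zeta_lip' (hN : ∃ x y : X, ‖x‖ = 1 ∧ ‖y‖ = 1 ∧ QuasiOrth y x) {a b : ℝ}
    (hab : a ≤ b) : zetaConv X b ≤ zetaConv X a + (b - a) := by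
  rw [← sub_le_iff_le_add]
  apply le_zeta' hN
  intro x y hx hy hq
  have h1 := zeta_le' hx hy hq b
  have he : x + b • y = (x + a • y) + (b - a) • y := by rw [sub_smul]; abel
  have h2 := norm_add_le (x + a • y) ((b - a) • y)
  rw [← he, norm_smul, hy, Real.norm_of_nonneg (sub_nonneg.2 hab)] at h2
  linarith

theorem zeta_halfspace (hN : ∃ x y : X, ‖x‖ = 1 ∧ ‖y‖ = 1 ∧ QuasiOrth y x) {u w : X}
    (hu : ‖u‖ = 1) (f : X →L[ℝ] ℝ) (hf : f ≠ 0) (hfu : f u = ‖f‖) (hfw : 0 ≤ f w) :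
    zetaConv X ‖w‖ ≤ ‖u + w‖ := by
  have hfpos : 0 < ‖f‖ := norm_pos_iff.2 hf
  have hden : 0 < ‖f‖ + f w := by linarith
  obtain ⟨t, ht⟩ : ∃ t, t = ‖f‖ / (‖f‖ + f w) := ⟨_, rfl⟩
  have ht0 : 0 < t := by rw [ht]; positivity
  have ht1 : t ≤ 1 := by rw [ht, div_le_one hden]; linarith
  obtain ⟨w', hw'⟩ : ∃ w', w' = t • (u + w) - u := ⟨_, rfl⟩
  have hfw' : f w' = 0 := by
    rw [hw']; simp only [map_sub, map_smul, map_add, smul_eq_mul, hfu]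
    rw [ht]; field_simp; ring
  have hx' : u + w' = t • (u + w) := by rw [hw']; abel
  have hR : ‖u + w'‖ = t * ‖u + w‖ := by rw [hx', norm_smul, Real.norm_of_nonneg ht0.le]
  have hR0 := norm_nonneg (u + w)
  have hz : zetaConv X ‖w'‖ ≤ ‖u + w'‖ := by
    by_cases h0 : w' = 0
    · obtain ⟨x, y, hx, hy, hq⟩ := hN
      have := zeta_le' hx hy hq 0
      simpa [h0, hu, hx] using this
    · have hn : ‖w'‖ ≠ 0 := norm_ne_zero_iff.2 h0
      have := zeta_le' (x := u) (y := ‖w'‖⁻¹ • w') hu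
        (by rw [norm_smul, norm_inv, norm_norm, inv_mul_cancel₀ hn])
        ⟨f, hf, by rw [hu, mul_one, hfu], by simp [hfw']⟩ ‖w'‖
      rwa [smul_smul, mul_inv_cancel₀ hn, one_smul] at this
  have hw : ‖w‖ ≤ ‖w'‖ + (1 - t) * ‖u + w‖ := by
    have he : w = w' + (1 - t) • (u + w) := by
      rw [hw', sub_smul, one_smul]; abel
    calc ‖w‖ = ‖w' + (1 - t) • (u + w)‖ := by rw [← he]
      _ ≤ _ := norm_add_le _ _
      _ = _ := by rw [norm_smul, Real.norm_of_nonneg (sub_nonneg.2 ht1)]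
  rcases le_total ‖w'‖ ‖w‖ with h | h
  · have := zeta_lip' hN h
    nlinarith
  · have := zeta_mono' hN (norm_nonneg w) h
    nlinarith

theorem modConv_le {ε : ℝ} {x y : X} (hx : ‖x‖ ≤ 1) (hy : ‖y‖ ≤ 1) (h : ε ≤ ‖x - y‖) :
    modConv X ε ≤ 1 - ‖x + y‖ / 2 := by
  apply csInf_le
  · refine ⟨0, ?_⟩
    rintro t ⟨x, y, hx, hy, -, rfl⟩
    have := norm_add_le x y
    linarith
  · exact ⟨x, y, hx, hy, h, rfl⟩

theorem close_of_near (hX : UnifConvex X) {C : Set X} (hC : Convex ℝ C) (q : X)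
    {d : ℝ} (hd : 0 < d) (hdist : ∀ x ∈ C, d ≤ ‖x - q‖) {ε : ℝ} (hε : 0 < ε) :
    ∃ δ > 0, ∀ a ∈ C, ∀ b ∈ C, ‖a - q‖ ≤ d + δ → ‖b - q‖ ≤ d + δ → ‖a - b‖ < ε := by
  obtain ⟨e, he⟩ : ∃ e, e = min (ε / (d + 1)) 2 := ⟨_, rfl⟩
  have he0 : 0 < e := by rw [he]; exact lt_min (by positivity) (by norm_num)
  have hc := hX e ⟨he0, he ▸ min_le_right _ _⟩
  set c := modConv X e with hcdef
  refine ⟨min 1 (d * c / 2), lt_min one_pos (by positivity), ?_⟩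
  intro a ha b hb hna hnb
  obtain ⟨δ, hδ⟩ : ∃ δ, δ = min 1 (d * c / 2) := ⟨_, rfl⟩
  rw [← hδ] at hna hnb
  have hδ0 : 0 < δ := by rw [hδ]; exact lt_min one_pos (by positivity)
  have hδ1 : δ ≤ 1 := hδ ▸ min_le_left _ _
  have hδ2 : δ ≤ d * c / 2 := hδ ▸ min_le_right _ _
  by_contra hcon
  push Not at hcon
  have hM : 0 < d + δ := by linarith
  have hMi : 0 < (d + δ)⁻¹ := by positivity
  have key := modConv_le (ε := e) (x := (d + δ)⁻¹ • (a - q)) (y := (d + δ)⁻¹ • (b - q))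
    (by rw [norm_smul, Real.norm_of_nonneg hMi.le, inv_mul_le_one₀ hM]; exact hna)
    (by rw [norm_smul, Real.norm_of_nonneg hMi.le, inv_mul_le_one₀ hM]; exact hnb)
    (by
      rw [← smul_sub, norm_smul, Real.norm_of_nonneg hMi.le, sub_sub_sub_cancel_right]
      calc e ≤ ε / (d + 1) := he ▸ min_le_left _ _
        _ ≤ ε / (d + δ) := by gcongr
        _ = (d + δ)⁻¹ * ε := by rw [div_eq_inv_mul]
        _ ≤ _ := by gcongr)
  rw [← smul_add, norm_smul, Real.norm_of_nonneg hMi.le, ← hcdef] at key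
  have hmid := hdist _ (hC ha hb (by norm_num : (0:ℝ) ≤ 1/2) (by norm_num : (0:ℝ) ≤ 1/2) (by norm_num))
  have he2 : (1/2 : ℝ) • a + (1/2 : ℝ) • b - q = (1/2 : ℝ) • ((a - q) + (b - q)) := by
    module
  rw [he2, norm_smul, Real.norm_of_nonneg (by norm_num : (0:ℝ) ≤ 1/2)] at hmid
  have h3 : (d + δ)⁻¹ * (2 * d) ≤ (d + δ)⁻¹ * ‖a - q + (b - q)‖ := by
    gcongr; linarith
  have h4 : (d + δ)⁻¹ * d ≤ 1 - c := by linarith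
  rw [inv_mul_le_iff₀ hM] at h4
  rcases le_total c 1 with h | h
  · nlinarith [mul_pos hd hc, mul_pos hδ0 hc]
  · nlinarith

theorem exists_nearest [CompleteSpace X] (hX : UnifConvex X) {C : Set X} (hC : Convex ℝ C)
    (hcl : IsClosed C) (hne : C.Nonempty) (q : X) (hd : 0 < Metric.infDist q C) :
    ∃ p ∈ C, ‖p - q‖ = Metric.infDist q C := by
  set d := Metric.infDist q C with hdd
  have hdist : ∀ x ∈ C, d ≤ ‖x - q‖ := by
    intro x hx
    rw [← dist_eq_norm, dist_comm]
    exact Metric.infDist_le_dist_of_mem hx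
  have hex : ∀ n : ℕ, ∃ x ∈ C, ‖x - q‖ < d + 1 / ((n : ℝ) + 1) := by
    intro n
    have : Metric.infDist q C < d + 1 / ((n : ℝ) + 1) := by
      rw [← hdd]; have : 0 < 1 / ((n : ℝ) + 1) := by positivity
      linarith
    obtain ⟨x, hx, hlt⟩ := (Metric.infDist_lt_iff hne).1 this
    exact ⟨x, hx, by rwa [← dist_eq_norm, dist_comm]⟩
  choose x hxC hxd using hex
  have hcau : CauchySeq x := by
    rw [Metric.cauchySeq_iff]
    intro ε hε
    obtain ⟨δ, hδ, H⟩ := close_of_near hX hC q hd hdist hε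
    obtain ⟨N, hN⟩ := exists_nat_one_div_lt hδ
    refine ⟨N, fun m hm n hn => ?_⟩
    rw [dist_eq_norm]
    have aux : ∀ m ≥ N, ‖x m - q‖ ≤ d + δ := by
      intro m hm
      have h1 : 1 / ((m : ℝ) + 1) ≤ 1 / ((N : ℝ) + 1) := Nat.one_div_le_one_div hm
      have := hxd m
      linarith
    exact H _ (hxC m) _ (hxC n) (aux m hm) (aux n hn)
  obtain ⟨p, hp⟩ := cauchySeq_tendsto_of_complete hcau
  have hpC : p ∈ C := hcl.mem_of_tendsto hp (Filter.Eventually.of_forall hxC)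
  refine ⟨p, hpC, le_antisymm ?_ (hdist p hpC)⟩
  have h1 : Filter.Tendsto (fun n => ‖x n - q‖) Filter.atTop (nhds ‖p - q‖) :=
    (hp.sub_const q).norm
  have h2 : Filter.Tendsto (fun n : ℕ => d + 1 / ((n : ℝ) + 1)) Filter.atTop (nhds (d + 0)) :=
    tendsto_const_nhds.add tendsto_one_div_add_atTop_nhds_zero_nat
  rw [add_zero] at h2
  exact le_of_tendsto_of_tendsto' h1 h2 (fun n => (hxd n).le)

theorem exists_support {C : Set X} (hC : Convex ℝ C) (q p : X) {d : ℝ} (hd : 0 < d)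
    (hdist : ∀ x ∈ C, d ≤ ‖x - q‖) (hp : p ∈ C) (hpd : ‖p - q‖ = d) :
    ∃ f : X →L[ℝ] ℝ, f ≠ 0 ∧ f (p - q) = ‖f‖ * d ∧ ∀ x ∈ C, 0 ≤ f (x - p) := by
  obtain ⟨f, u, hfb, hfC⟩ := geometric_hahn_banach_open (convex_ball q d) Metric.isOpen_ball hC
    (by
      rw [Set.disjoint_left]
      intro x hx hxC
      rw [Metric.mem_ball, dist_eq_norm] at hx
      exact absurd (hdist x hxC) (not_le.2 hx))
  have hcb : ∀ a ∈ Metric.closedBall q d, f a ≤ u := by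
    intro a ha
    rw [← closure_ball q hd.ne'] at ha
    exact closure_minimal (fun x hx => (hfb x hx).le) (isClosed_le f.continuous continuous_const) ha
  have hq : f q < u := hfb q (Metric.mem_ball_self hd)
  have hpu := hfC p hp
  have hnorm : ‖f‖ * d ≤ u - f q := by
    rw [← le_div_iff₀ hd]
    apply ContinuousLinearMap.opNorm_le_of_unit_norm (div_nonneg (by linarith) hd.le)
    intro v hv
    have h1 := hcb (q + d • v) (by
      rw [Metric.mem_closedBall, dist_eq_norm, add_sub_cancel_left, norm_smul, hv,
        Real.norm_of_nonneg hd.le, mul_one])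
    have h2 := hcb (q - d • v) (by
      rw [Metric.mem_closedBall, dist_eq_norm, sub_sub_cancel_left, norm_neg, norm_smul, hv,
        Real.norm_of_nonneg hd.le, mul_one])
    simp only [map_add, map_sub, map_smul, smul_eq_mul] at h1 h2
    rw [le_div_iff₀ hd, Real.norm_eq_abs]
    rcases abs_cases (f v) with ⟨h, _⟩ | ⟨h, _⟩ <;> rw [h] <;> linarith
  have hle : f (p - q) ≤ ‖f‖ * d := by
    have := f.le_opNorm (p - q)
    rw [hpd] at this
    exact (le_abs_self _).trans this
  have hsub : f (p - q) = f p - f q := map_sub f p q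
  refine ⟨f, ?_, ?_, ?_⟩
  · rintro rfl
    simp at hq hpu
    linarith
  · linarith
  · intro x hx
    have := hfC x hx
    rw [map_sub]
    linarith

theorem helly_step [CompleteSpace X] (hX : UnifConvex X) {a b : ℝ} (ha : 0 < a) (hb : 0 < b)
    (hab : b * zetaConv X b = a)
    {K : Set X} (hK : Convex ℝ K) (hKne : K.Nonempty) (q : X) (hd : 1 / a < Metric.infDist q K) :
    ∃ p : X, ∀ L : Set X, 1 < Metric.infDist p L →
      K ∩ L = ∅ ∨ 1 / b < Metric.infDist q (K ∩ L) := by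
  have hz : 0 < zetaConv X b := by
    by_contra h
    push Not at h
    nlinarith
  have hN : ∃ x y : X, ‖x‖ = 1 ∧ ‖y‖ = 1 ∧ QuasiOrth y x := by
    by_contra h
    have : zetaConv X b = 0 := by
      unfold zetaConv
      convert Real.sInf_empty
      rw [Set.eq_empty_iff_forall_notMem]
      rintro t ⟨x, y, hx, hy, hq, -⟩
      exact h ⟨x, y, hx, hy, hq⟩
    linarith
  have h1a : 0 < 1 / a := by positivity
  obtain ⟨d, hdd⟩ : ∃ d, d = Metric.infDist q (closure K) := ⟨_, rfl⟩
  have hdK : d = Metric.infDist q K := by rw [hdd, Metric.infDist_closure]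
  rw [← hdK] at hd
  have hd0 : 0 < d := h1a.trans hd
  obtain ⟨p, hp, hpd⟩ := exists_nearest hX hK.closure isClosed_closure hKne.closure q (hdd ▸ hd0)
  rw [← hdd] at hpd
  have hdist : ∀ x ∈ closure K, d ≤ ‖x - q‖ := by
    intro x hx
    rw [← dist_eq_norm, dist_comm, hdd]
    exact Metric.infDist_le_dist_of_mem hx
  obtain ⟨f, hf0, hfp, hfC⟩ := exists_support hK.closure q p hd0 hdist hp hpd
  refine ⟨p, fun L hL => ?_⟩
  rcases Set.eq_empty_or_nonempty (K ∩ L) with he | hne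
  · exact Or.inl he
  right
  rcases lt_or_ge (1 / b) d with hbd | hbd
  · refine hbd.trans_le ((Metric.le_infDist hne).2 ?_)
    rintro x ⟨hx, -⟩
    rw [dist_comm, dist_eq_norm]
    exact hdist x (subset_closure hx)
  have hbd' : b ≤ 1 / d := by
    rw [le_div_iff₀ hb] at *
    rw [le_div_iff₀ hd0]; linarith
  have hlt : 1 / b < d * zetaConv X b := by
    rw [div_lt_iff₀ ha] at hd
    rw [div_lt_iff₀ hb]
    calc (1 : ℝ) < d * a := hd
      _ = _ := by rw [← hab]; ring
  refine hlt.trans_le ((Metric.le_infDist hne).2 ?_)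
  rintro x ⟨hxK, hxL⟩
  rw [dist_comm, dist_eq_norm]
  have hdi : 0 < d⁻¹ := by positivity
  have hxp : 1 < ‖x - p‖ := by
    rw [← dist_eq_norm, dist_comm]
    exact hL.trans_le (Metric.infDist_le_dist_of_mem hxL)
  have key := zeta_halfspace hN (u := d⁻¹ • (p - q)) (w := d⁻¹ • (x - p))
    (by rw [norm_smul, Real.norm_of_nonneg hdi.le, hpd, inv_mul_cancel₀ hd0.ne'])
    f hf0 (by rw [map_smul, hfp, smul_eq_mul]; field_simp)
    (by rw [map_smul, smul_eq_mul]; exact mul_nonneg hdi.le (hfC x (subset_closure hxK)))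
  rw [← smul_add, norm_smul, norm_smul, Real.norm_of_nonneg hdi.le,
    show p - q + (x - p) = x - q by abel] at key
  have hmono := zeta_mono' hN (a := b) (b := d⁻¹ * ‖x - p‖) hb.le (by
    rw [one_div] at hbd'
    nlinarith)
  have := hmono.trans key
  rwa [le_inv_mul_iff₀ hd0] at this

theorem helly_count [CompleteSpace X]
    (hX : UnifConvex X) {r : ℕ → ℝ} (hr : IsHellySeq X r) (q : X) (k : ℕ) (hk1 : 1 ≤ k) :
    ∀ (F : Fin k → Finset (Set X))
    (_ : ∀ i, ∀ K ∈ F i, Convex ℝ K)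
    (m : Fin k → ℕ)
    (_ : ∀ p : X, ∀ i : Fin k,
      m i ≤ ((F i).filter (fun K => 1 < Metric.infDist p K)).card),
    (∏ i : Fin k, m i) ≤
      ((Fintype.piFinset F).filter
        (fun T : Fin k → Set X =>
          (⋂ j : Fin k, T j) = ∅ ∨ 1 / r k < Metric.infDist q (⋂ j : Fin k, T j))).card := by
  induction k, hk1 using Nat.le_induction with
  | base =>
    intro F hconv m hm
    rw [Fin.prod_univ_one]
    refine (hm q 0).trans ?_
    apply Finset.card_le_card_of_injOn (fun K => fun _ : Fin 1 => K)
    · intro K hK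
      simp only [Finset.coe_filter, Set.mem_setOf_eq] at hK
      simp only [Finset.coe_filter, Set.mem_setOf_eq, Fintype.mem_piFinset]
      refine ⟨?_, Or.inr ?_⟩
      · intro i
        rw [Subsingleton.elim i 0]; exact hK.1
      · rw [hr.2.1, Set.iInter_const]
        simpa using hK.2
    · intro K _ K' _ h
      exact congrFun h 0
  | succ k hk ih =>
    intro F hconv m hm
    rw [Fin.prod_univ_castSucc]
    have IH := ih (fun i => F i.castSucc) (fun i => hconv _) (fun i => m i.castSucc)
      (fun p i => hm p _)
    obtain ⟨S, hS⟩ : ∃ S, S = ((Fintype.piFinset (fun i : Fin k => F i.castSucc)).filter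
        (fun T : Fin k → Set X =>
          (⋂ j : Fin k, T j) = ∅ ∨ 1 / r k < Metric.infDist q (⋂ j : Fin k, T j))) := ⟨_, rfl⟩
    rw [← hS] at IH
    have hinter : ∀ (T : Fin k → Set X) (L : Set X),
        (⋂ j : Fin (k + 1), (Fin.snoc T L : Fin (k + 1) → Set X) j) = (⋂ j, T j) ∩ L := by
      intro T L
      ext x
      simp only [Set.mem_iInter, Set.mem_inter_iff]
      rw [Fin.forall_fin_succ']
      simp
    let G : (Fin k → Set X) → Finset (Set X) := fun T => (F (Fin.last k)).filter
      (fun L => (⋂ j, T j) ∩ L = ∅ ∨ 1 / r (k + 1) < Metric.infDist q ((⋂ j, T j) ∩ L))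
    have hG : ∀ T ∈ S, m (Fin.last k) ≤ (G T).card := by
      intro T hT
      rw [hS, Finset.mem_filter, Fintype.mem_piFinset] at hT
      obtain ⟨hTF, hT⟩ := hT
      have : ∃ p : X, ∀ L : Set X, 1 < Metric.infDist p L → (⋂ j, T j) ∩ L = ∅ ∨
          1 / r (k + 1) < Metric.infDist q ((⋂ j, T j) ∩ L) := by
        rcases Set.eq_empty_or_nonempty (⋂ j, T j) with he | hne
        · exact ⟨q, fun L _ => Or.inl (by rw [he, Set.empty_inter])⟩
        · have hT' := hT.resolve_left hne.ne_empty
          exact helly_step hX (hr.1 k hk).1 (hr.1 (k + 1) (by omega)).1 (hr.2.2 k hk)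
            (convex_iInter fun j => hconv _ _ (hTF j)) hne q hT'
      obtain ⟨p, hp⟩ := this
      refine (hm p (Fin.last k)).trans (Finset.card_le_card ?_)
      intro L hL
      rw [Finset.mem_filter] at hL
      exact Finset.mem_filter.2 ⟨hL.1, hp L hL.2⟩
    calc (∏ i : Fin k, m i.castSucc) * m (Fin.last k) ≤ S.card * m (Fin.last k) := by gcongr
      _ ≤ ∑ T ∈ S, (G T).card := by
        rw [← smul_eq_mul]; exact Finset.card_nsmul_le_sum _ _ _ hG
      _ = (S.sigma G).card := (Finset.card_sigma _ _).symm
      _ ≤ _ := by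
        apply Finset.card_le_card_of_injOn
          (fun z => (Fin.snoc z.1 z.2 : Fin (k + 1) → Set X))
        · rintro ⟨T, L⟩ hz
          rw [Finset.mem_coe, Finset.mem_sigma] at hz
          obtain ⟨hT, hL⟩ := hz
          simp only at hT hL
          rw [hS, Finset.mem_filter, Fintype.mem_piFinset] at hT
          have hL' := Finset.mem_filter.1 hL
          rw [Finset.mem_coe, Finset.mem_filter, Fintype.mem_piFinset, Fin.forall_fin_succ',
            hinter]
          refine ⟨⟨?_, ?_⟩, hL'.2⟩
          · intro i; simpa using hT.1 i
          · simpa using hL'.1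
        · rintro ⟨T, L⟩ _ ⟨T', L'⟩ _ h
          have h' : (Fin.snoc T L : Fin (k + 1) → Set X) = Fin.snoc T' L' := h
          rw [Fin.snoc_inj] at h'
          obtain ⟨rfl, rfl⟩ := h'
          rfl

end HellyHelpers

/-- **Counting rainbow tuples far from a point (colorful Helly, counting form).** -/
theorem no_dim_colorful_counting
    {X : Type*} [NormedAddCommGroup X] [NormedSpace ℝ X] [CompleteSpace X]
    (hX : UnifConvex X) {r : ℕ → ℝ} (hr : IsHellySeq X r)
    {k : ℕ} (hk1 : 1 ≤ k)
    (F : Fin k → Finset (Set X)) (hne : ∀ i, (F i).Nonempty)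
    (hconv : ∀ i, ∀ K ∈ F i, Convex ℝ K)
    (m : Fin k → ℕ)
    (hm : ∀ p : X, ∀ i : Fin k,
      m i ≤ ((F i).filter (fun K => 1 < Metric.infDist p K)).card)
    (q : X) :
    (∏ i : Fin k, m i) ≤
      ((Fintype.piFinset F).filter
        (fun T : Fin k → Set X =>
          (⋂ j : Fin k, T j) = ∅ ∨ 1 / r k < Metric.infDist q (⋂ j : Fin k, T j))).card := by
  exact helly_count hX hr q k hk1 F hconv m hm
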